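/- Let G be a finite group with conjugacy classes labeled α and irreducible characters χ_j with dimensions d_j. Then Σ_{x∈α} Σ_{y∈β} [xy ∈ γ̂] · |G| / √(h_α h_β h_γ) = Σ_j χ_j(C_α) χ_j(C_β) χ_j(C_γ) / d_j, i.e. the three-point function N_{αβγ} of the lattice TFT for R = ℂ[G] equals the character-sum expression Σ_j χ_j(C_α)χ_j(C_β)χ_j(C_γ)/d_j. -/

import Mathlib

open FDRep CategoryTheory

noncomputable section

/-- linear extension of the character to the normalized class sum:
`χ_V(C_α) = (1/√h_α) ∑_{x∈α} χ_V(x)` -/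
def chC {G : Type} [Group G] [Fintype G] (V : FDRep ℂ G) (α : ConjClasses G) : ℂ :=
  ((Real.sqrt (Nat.card α.carrier) : ℂ))⁻¹ *
    ∑ x ∈ (Set.toFinite α.carrier).toFinset, V.character x


namespace Stmt14Aux

/-- norm of an irreducible representation -/
theorem simple_of_irr {G : Type} [Group G] [Fintype G] {V : Type} [AddCommGroup V] [Module ℂ V]
    [FiniteDimensional ℂ V] (ρ : Representation ℂ G V) [ρ.IsIrreducible] :
    Simple (FDRep.of ρ) := by
  have := invertibleOfNonzero (NeZero.ne (Nat.card G : ℂ))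
  rw [FDRep.simple_iff_char_is_norm_one]
  have h := Representation.card_inv_mul_sum_char_mul_char_eq_finrank ρ ρ
  rw [Representation.IsIrreducible.finrank_intertwiningMap_self] at h
  rw [inv_mul_eq_iff_eq_mul₀ (NeZero.ne (Nat.card G : ℂ))] at h
  rw [mul_comm, Nat.cast_one, one_mul] at h
  exact h

theorem char_add {G : Type} [Group G] {V : Type} [AddCommGroup V] [Module ℂ V]
    [FiniteDimensional ℂ V] (ρ : Representation ℂ G V) (N M : Subrepresentation ρ)
    (h : IsCompl N M) (g : G) :
    ρ.character g = N.toRepresentation.character g + M.toRepresentation.character g := by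
  have h' : IsCompl N.toSubmodule M.toSubmodule := by
    constructor
    · rw [disjoint_iff, ← Subrepresentation.toSubmodule_inf, h.inf_eq_bot]; rfl
    · rw [codisjoint_iff, ← Subrepresentation.toSubmodule_sup, h.sup_eq_top]; rfl
  let F : Bool → Submodule ℂ V := fun b => cond b N.toSubmodule M.toSubmodule
  have hF : DirectSum.IsInternal F := by
    rw [DirectSum.isInternal_submodule_iff_isCompl F (i := true) (j := false) (by simp)
      (by ext b; cases b <;> simp)]
    exact h'
  have hm : ∀ b, Set.MapsTo (ρ g) (F b) (F b) := by
    intro b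
    cases b
    · exact fun v hv => M.apply_mem_toSubmodule g hv
    · exact fun v hv => N.apply_mem_toSubmodule g hv
  have := LinearMap.trace_eq_sum_trace_restrict hF hm
  rw [Fintype.sum_bool] at this
  exact this

theorem expand {G : Type} [Group G] [Fintype G]
    {ι : Type} [Fintype ι] (W : ι → FDRep ℂ G)
    (hsimple : ∀ i, Simple (W i))
    (hdistinct : ∀ i j, i ≠ j → IsEmpty (W i ≅ W j))
    (hcomplete : ∀ V : FDRep ℂ G, Simple V → ∃ i, Nonempty (V ≅ W i)) (n : ℕ) :
    ∀ (V : Type) [AddCommGroup V] [Module ℂ V] [FiniteDimensional ℂ V]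
      (ρ : Representation ℂ G V), Module.finrank ℂ V = n → ∀ g,
      ρ.character g = ∑ i, ((Nat.card G : ℂ)⁻¹ * ∑ h : G, ρ.character h * (W i).character h⁻¹) *
        (W i).character g := by
  classical
  have := invertibleOfNonzero (NeZero.ne (Nat.card G : ℂ))
  induction n using Nat.strong_induction_on with
  | _ n ih =>
  intro V _ _ _ ρ hn g
  by_cases hV : Subsingleton V
  · have : ∀ g, ρ.character g = 0 := by
      intro g
      have : ρ g = 0 := Subsingleton.elim _ _
      simp [Representation.character, this]
    simp [this]
  by_cases hirr : ρ.IsIrreducible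
  · have hs := simple_of_irr ρ
    obtain ⟨i, ⟨e⟩⟩ := hcomplete _ hs
    have hc : ρ.character = (W i).character := FDRep.char_iso e
    rw [hc, Finset.sum_eq_single i]
    · have := hsimple i
      rw [FDRep.char_orthonormal, if_pos ⟨Iso.refl _⟩, one_mul]
    · intro j _ hj
      have := hsimple i
      have := hsimple j
      rw [FDRep.char_orthonormal, if_neg, zero_mul]
      rw [not_nonempty_iff]
      exact hdistinct i j hj.symm
    · simp
  · have hnt : Nontrivial V := not_subsingleton_iff_nontrivial.1 hV
    have hbt : (⊥ : Subrepresentation ρ) ≠ ⊤ := by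
      intro h
      have := congrArg Subrepresentation.toSubmodule h
      exact bot_ne_top (α := Submodule ℂ V) this
    have : ∃ N : Subrepresentation ρ, N ≠ ⊥ ∧ N ≠ ⊤ := by
      by_contra! hcon
      exact hirr { exists_pair_ne := ⟨_, _, hbt⟩
                   eq_bot_or_eq_top := fun N => or_iff_not_imp_left.2 (hcon N) }
    obtain ⟨N, hN1, hN2⟩ := this
    have : NeZero (Nat.card G : ℂ) := inferInstance
    have hss : ρ.IsSemisimpleRepresentation := inferInstance
    obtain ⟨M, hM⟩ := hss.exists_isCompl N
    have hM2 : M ≠ ⊤ := by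
      rintro rfl
      exact hN1 (by simpa using hM.inf_eq_bot)
    have key : ∀ N : Subrepresentation ρ, N ≠ ⊤ → Module.finrank ℂ N.toSubmodule < n := by
      intro N hN
      rw [← hn]
      apply Submodule.finrank_lt
      intro h
      exact hN (Subrepresentation.toSubmodule_injective h)
    have hadd := char_add ρ N M hM
    have e1 := ih _ (key N hN2) _ N.toRepresentation rfl g
    have e2 := ih _ (key M hM2) _ M.toRepresentation rfl g
    simp only [hadd, add_mul, Finset.sum_add_distrib, mul_add]
    rw [← e1, ← e2]

theorem char_reg {G : Type} [Group G] [Fintype G] [DecidableEq G] (g : G) :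
    (Representation.leftRegular ℂ G).character g = if g = 1 then (Nat.card G : ℂ) else 0 := by
  rw [Representation.character,
    LinearMap.trace_eq_matrix_trace ℂ (Module.Basis.ofRepr (MonoidAlgebra.coeffLinearEquiv (M := G) ℂ))]
  simp only [Matrix.trace, Matrix.diag, LinearMap.toMatrix_apply]
  have key : ∀ x : G, (Module.Basis.ofRepr (MonoidAlgebra.coeffLinearEquiv (M := G) ℂ)).repr
      (Representation.leftRegular ℂ G g
        (Module.Basis.ofRepr (MonoidAlgebra.coeffLinearEquiv (M := G) ℂ) x)) x =
      if g = 1 then 1 else 0 := by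
    intro x
    have hb : Module.Basis.ofRepr (MonoidAlgebra.coeffLinearEquiv (M := G) ℂ) x =
      MonoidAlgebra.single x 1 := rfl
    rw [hb, Representation.ofMulAction_single]
    change (Finsupp.single (g • x) (1 : ℂ)) x = _
    simp [Finsupp.single_apply]
  simp only [key]
  split_ifs <;> simp

theorem reg_sum {G : Type} [Group G] [Fintype G] [DecidableEq G]
    {ι : Type} [Fintype ι] (W : ι → FDRep ℂ G)
    (hsimple : ∀ i, Simple (W i))
    (hdistinct : ∀ i j, i ≠ j → IsEmpty (W i ≅ W j))
    (hcomplete : ∀ V : FDRep ℂ G, Simple V → ∃ i, Nonempty (V ≅ W i)) (g : G) :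
    ∑ i, (Module.finrank ℂ (W i) : ℂ) * (W i).character g =
      if g = 1 then (Nat.card G : ℂ) else 0 := by
  have h := expand W hsimple hdistinct hcomplete _ _ (Representation.leftRegular ℂ G) rfl g
  rw [char_reg] at h
  rw [h]
  refine Finset.sum_congr rfl fun i _ => ?_
  congr 1
  simp [char_reg]

theorem norm_one {G : Type} [Group G] [Fintype G] (V : FDRep ℂ G) [hs : Simple V] :
    ∑ g : G, V.character g * V.character g⁻¹ = Nat.card G :=
  (FDRep.simple_iff_char_is_norm_one V).1 hs

theorem dim_ne {G : Type} [Group G] [Fintype G] (V : FDRep ℂ G) [hs : Simple V] :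
    Module.finrank ℂ V ≠ 0 := by
  intro h
  have h0 : Subsingleton V := Module.finrank_zero_iff.1 h
  have h1 := norm_one V
  have : ∀ g, V.character g = 0 := by
    intro g
    have : V.ρ g = 0 := Subsingleton.elim _ _
    simp [FDRep.character, this]
  simp only [this, mul_zero, Finset.sum_const_zero] at h1
  exact NeZero.ne (Nat.card G : ℂ) h1.symm

/-- Schur -/
theorem schur {G : Type} [Group G] [Fintype G] (V : FDRep ℂ G) [hs : Simple V]
    (A : V →ₗ[ℂ] V) (hA : ∀ g, A ∘ₗ V.ρ g = V.ρ g ∘ₗ A) :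
    A = ((Module.finrank ℂ V : ℂ)⁻¹ * LinearMap.trace ℂ V A) • LinearMap.id := by
  have := invertibleOfNonzero (NeZero.ne (Nat.card G : ℂ))
  have hd := dim_ne V
  let ρ : Representation ℂ G V := V.ρ
  have h := Representation.card_inv_mul_sum_char_mul_char_eq_finrank ρ ρ
  have h2 : (Nat.card G : ℂ)⁻¹ * ∑ g : G, ρ.character g * ρ.character g⁻¹ = 1 := by
    have := norm_one V
    change ∑ g : G, ρ.character g * ρ.character g⁻¹ = _ at this
    rw [this, inv_mul_cancel₀ (NeZero.ne (Nat.card G : ℂ))]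
  rw [h2] at h
  have h3 : Module.finrank ℂ (Representation.IntertwiningMap ρ ρ) = 1 := by exact_mod_cast h.symm
  let I : Representation.IntertwiningMap ρ ρ := ⟨LinearMap.id, fun g => rfl⟩
  let A' : Representation.IntertwiningMap ρ ρ := ⟨A, hA⟩
  have hI : I ≠ 0 := by
    intro h
    have h' : (LinearMap.id : V →ₗ[ℂ] V) = 0 :=
      congrArg Representation.IntertwiningMap.toLinearMap h
    have : Subsingleton V := ⟨fun a b => by
      have ha := LinearMap.congr_fun h' a
      have hb := LinearMap.congr_fun h' b
      simp at ha hb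
      rw [ha, hb]⟩
    exact hd Module.finrank_zero_of_subsingleton
  obtain ⟨c, hc⟩ := (finrank_eq_one_iff_of_nonzero' I hI).1 h3 A'
  have hc' : c • (LinearMap.id : V →ₗ[ℂ] V) = A :=
    congrArg Representation.IntertwiningMap.toLinearMap hc
  have hd' : (Module.finrank ℂ V : ℂ) ≠ 0 := by exact_mod_cast hd
  rw [← hc', map_smul, LinearMap.trace_id, smul_eq_mul]
  congr 1
  field_simp

/-- class sum of characters -/
def cs {G : Type} [Group G] [Fintype G] (V : FDRep ℂ G) (α : ConjClasses G) : ℂ :=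
  ∑ x ∈ (Set.toFinite α.carrier).toFinset, V.character x

theorem class_scalar {G : Type} [Group G] [Fintype G] (V : FDRep ℂ G) [hs : Simple V]
    (α : ConjClasses G) :
    ∑ x ∈ (Set.toFinite α.carrier).toFinset, V.ρ x =
      ((Module.finrank ℂ V : ℂ)⁻¹ * cs V α) • (LinearMap.id : V →ₗ[ℂ] V) := by
  have h := schur V (∑ x ∈ (Set.toFinite α.carrier).toFinset, V.ρ x) (by
    intro g
    change (∑ x ∈ (Set.toFinite α.carrier).toFinset, V.ρ x) * V.ρ g =
      V.ρ g * (∑ x ∈ (Set.toFinite α.carrier).toFinset, V.ρ x)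
    rw [Finset.sum_mul, Finset.mul_sum]
    refine Finset.sum_bij' (fun x _ => g⁻¹ * x * g) (fun x _ => g * x * g⁻¹) ?_ ?_ ?_ ?_ ?_
    · intro x hx
      simp only [Set.Finite.mem_toFinset, ConjClasses.mem_carrier_iff_mk_eq] at hx ⊢
      rw [← hx, ConjClasses.mk_eq_mk_iff_isConj, isConj_comm, isConj_iff]
      exact ⟨g⁻¹, by simp⟩
    · intro x hx
      simp only [Set.Finite.mem_toFinset, ConjClasses.mem_carrier_iff_mk_eq] at hx ⊢
      rw [← hx, ConjClasses.mk_eq_mk_iff_isConj, isConj_comm, isConj_iff]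
      exact ⟨g, by simp⟩
    · intro x _; simp [mul_assoc]
    · intro x _; simp [mul_assoc]
    · intro x _
      rw [← map_mul, ← map_mul]
      simp [mul_assoc])
  rw [map_sum] at h
  exact h

theorem triple {G : Type} [Group G] [Fintype G] (V : FDRep ℂ G) [hs : Simple V]
    (α β γ : ConjClasses G) :
    ∑ x ∈ (Set.toFinite α.carrier).toFinset, ∑ y ∈ (Set.toFinite β.carrier).toFinset,
      ∑ z ∈ (Set.toFinite γ.carrier).toFinset,
        (Module.finrank ℂ V : ℂ) * V.character (x * y * z) =
      cs V α * cs V β * cs V γ / (Module.finrank ℂ V : ℂ) := by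
  have hd : (Module.finrank ℂ V : ℂ) ≠ 0 := by exact_mod_cast dim_ne V
  have h : (∑ x ∈ (Set.toFinite α.carrier).toFinset, V.ρ x) *
      (∑ x ∈ (Set.toFinite β.carrier).toFinset, V.ρ x) *
      (∑ x ∈ (Set.toFinite γ.carrier).toFinset, V.ρ x) =
      ∑ x ∈ (Set.toFinite α.carrier).toFinset, ∑ y ∈ (Set.toFinite β.carrier).toFinset,
      ∑ z ∈ (Set.toFinite γ.carrier).toFinset, V.ρ (x * y * z) := by
    rw [Finset.sum_mul_sum, Finset.sum_mul]
    refine Finset.sum_congr rfl fun x _ => ?_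
    rw [Finset.sum_mul]
    refine Finset.sum_congr rfl fun y _ => ?_
    rw [Finset.mul_sum]
    simp only [map_mul]
  have h2 := congrArg (LinearMap.trace ℂ V) h
  simp only [map_sum] at h2
  simp only [FDRep.character, ← Finset.mul_sum]
  rw [← h2, class_scalar, class_scalar, class_scalar, ← Module.End.one_eq_id]
  simp only [mul_smul_comm, mul_one, map_smul, LinearMap.trace_one, smul_eq_mul]
  field_simp

theorem count {G : Type} [Group G] [Fintype G] [DecidableEq G] (α β γ : ConjClasses G) (c : ℂ) :
    ((Nat.card {p : G × G // p.1 ∈ α.carrier ∧ p.2 ∈ β.carrier ∧ (p.1 * p.2)⁻¹ ∈ γ.carrier}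
          : ℕ) : ℂ) * c =
    ∑ x ∈ (Set.toFinite α.carrier).toFinset, ∑ y ∈ (Set.toFinite β.carrier).toFinset,
      ∑ z ∈ (Set.toFinite γ.carrier).toFinset, if x * y * z = 1 then c else 0 := by
  classical
  have h1 : ∀ x y z : G, x * y * z = 1 ↔ (x * y)⁻¹ = z := fun x y z =>
    inv_eq_iff_mul_eq_one.symm
  simp only [h1, Finset.sum_ite_eq, Set.Finite.mem_toFinset]
  rw [← Finset.sum_product', ← Finset.sum_filter, Finset.sum_const, nsmul_eq_mul,
    Nat.card_eq_fintype_card, Fintype.card_subtype]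
  congr 3
  ext p
  simp [and_assoc]

end Stmt14Aux

/-- for a complete family `W i` of pairwise non-isomorphic irreducible
representations of a finite group G, the three-point function of the lattice TFT for
ℂ[G], `N_{αβγ} = #{(x,y)∈α×β : xy ∈ γ̂} · |G| / √(h_α h_β h_γ)`, equals
`∑_j χ_j(C_α) χ_j(C_β) χ_j(C_γ) / d_j`. -/
theorem stmt14 {G : Type} [Group G] [Fintype G] [DecidableEq G]
    {ι : Type} [Fintype ι] (W : ι → FDRep ℂ G)
    (hsimple : ∀ i, Simple (W i))
    (hdistinct : ∀ i j, i ≠ j → IsEmpty (W i ≅ W j))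
    (hcomplete : ∀ V : FDRep ℂ G, Simple V → ∃ i, Nonempty (V ≅ W i)) :
    ∀ α β γ : ConjClasses G,
      ((Nat.card {p : G × G // p.1 ∈ α.carrier ∧ p.2 ∈ β.carrier ∧ (p.1 * p.2)⁻¹ ∈ γ.carrier}
          : ℕ) : ℂ) * (Fintype.card G : ℂ) /
          (Real.sqrt ((Nat.card α.carrier : ℝ) * (Nat.card β.carrier) * (Nat.card γ.carrier))
            : ℂ) =
        ∑ i, chC (W i) α * chC (W i) β * chC (W i) γ / (Module.finrank ℂ (W i) : ℂ) := by
  intro α β γ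
  rw [Stmt14Aux.count]
  have h : ∀ x : G, (if x = 1 then (Fintype.card G : ℂ) else 0) =
      ∑ i, (Module.finrank ℂ (W i) : ℂ) * (W i).character x := by
    intro x
    rw [Stmt14Aux.reg_sum W hsimple hdistinct hcomplete, Nat.card_eq_fintype_card]
  simp only [h]
  simp only [Finset.sum_comm (s := (Set.toFinite (ConjClasses.carrier _)).toFinset)
    (t := (Finset.univ : Finset ι))]
  rw [Finset.sum_div]
  refine Finset.sum_congr rfl fun i _ => ?_
  have := hsimple i
  rw [Stmt14Aux.triple]
  rw [Real.sqrt_mul (by positivity), Real.sqrt_mul (by positivity)]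
  simp only [chC, Stmt14Aux.cs]
  push_cast
  simp only [div_eq_mul_inv, mul_inv]
  ring

end
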